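/- A group G is isomorphic to the group of a Gauss diagram (i.e., there exist a natural number m, a permutation σ of Fin m, a map t : Fin m → Fin m, and signs ε : Fin m → ℤ with ε q = ±1, such that G is isomorphic to the presented group with generators x_i (i : Fin m) and relators (FreeGroup.of (σ q))⁻¹ * (FreeGroup.of (t q))^(−ε q) * (FreeGroup.of q) * (FreeGroup.of (t q))^(ε q) for q : Fin m) if and only if G admits a Wirtinger presentation such that every connected component of the associated graph Γ has Euler characteristic 0 or 1. -/

import Mathlib

/-- The relator set of a Wirtinger presentation on `n` generators with `s` relators. -/
def wirtingerRels (n s : ℕ) (a b : Fin s → Fin n) (w : Fin s → FreeGroup (Fin n)) :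
    Set (FreeGroup (Fin n)) :=
  { r | ∃ q : Fin s,
      r = (FreeGroup.of (a q))⁻¹ * (w q)⁻¹ * FreeGroup.of (b q) * w q }

/-- The edge relation of the graph Γ associated to a Wirtinger presentation. -/
def wirtingerEdge (n s : ℕ) (a b : Fin s → Fin n) (i j : Fin n) : Prop :=
  ∃ q : Fin s, a q = i ∧ b q = j

/-- The relator set of the group of a Gauss diagram with `m` arrows, determined by a
permutation `σ` of the arcs, the arc `t q` carrying the tail of the arrow ending arc `q`,
and signs `ε q = ±1`. -/
def gaussRels (m : ℕ) (σ : Equiv.Perm (Fin m)) (t : Fin m → Fin m) (ε : Fin m → ℤ) :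
    Set (FreeGroup (Fin m)) :=
  { r | ∃ q : Fin m,
      r = (FreeGroup.of (σ q))⁻¹ * (FreeGroup.of (t q)) ^ (-ε q) *
        FreeGroup.of q * (FreeGroup.of (t q)) ^ (ε q) }

/-!
A Wirtinger presentation is a gain graph: the relator of an edge `q` says that the gain `w q`
conjugates `x_{a q}` to `x_{b q}`. Replacing each `x_i` by `W_i x_i W_i⁻¹` switches the gains to
`W_{b q} w_q W_{a q}⁻¹`. If `W` makes as many edges as possible neutral (gain `1`), then the neutral
edges connect every component, so by the hypothesis on the Euler characteristic at most one edge of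
each component is not neutral. The relators now say that the switched generators agree on each
component and commute with its remaining gain. A permutation whose cycles are the components, with
that gain put on one edge of each cycle, gives the same conditions, hence the same group. Cutting
each generator of this cyclic presentation into one arc per letter of its gain gives a Gauss
diagram.
-/

section Components

variable {V E : Type*} {a b : E → V} {T : Set E}

/-- The partition into connected components of the graph with vertex set `V` and one edge joining
`a q` to `b q` for each `q ∈ T`. -/
def componentSetoid (a b : E → V) (T : Set E) : Setoid V :=
  Relation.EqvGen.setoid fun i j => ∃ q ∈ T, a q = i ∧ b q = j

theorem componentSetoid_rel {q : E} (hq : q ∈ T) : componentSetoid a b T (a q) (b q) :=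
  .rel _ _ ⟨q, hq, rfl, rfl⟩

theorem componentSetoid_le_iff {S : Setoid V} :
    componentSetoid a b T ≤ S ↔ ∀ q ∈ T, S (a q) (b q) := by
  refine ⟨fun h q hq => h (componentSetoid_rel hq), fun h => Setoid.eqvGen_le ?_⟩
  rintro _ _ ⟨q, hq, rfl, rfl⟩
  exact h q hq

theorem componentSetoid_mono {T' : Set E} (h : T ⊆ T') :
    componentSetoid a b T ≤ componentSetoid a b T' :=
  componentSetoid_le_iff.2 fun _ hq => componentSetoid_rel (h hq)

theorem componentSetoid_eq_reachableSetoid : componentSetoid a b T =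
    (SimpleGraph.fromRel fun i j => ∃ q ∈ T, a q = i ∧ b q = j).reachableSetoid := by
  refine le_antisymm (componentSetoid_le_iff.2 fun q hq => ?_) fun {x y} hxy => ?_
  · obtain h | h := eq_or_ne (a q) (b q)
    · exact h ▸ Setoid.refl' _ _
    · exact SimpleGraph.Adj.reachable ⟨h, .inl ⟨q, hq, rfl, rfl⟩⟩
  · obtain ⟨p⟩ := hxy
    induction p with
    | nil => exact Setoid.refl' _ _
    | cons h _ ih =>
      refine Setoid.trans' _ ?_ ih
      rcases h.2 with ⟨q, hq, rfl, rfl⟩ | ⟨q, hq, rfl, rfl⟩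
      exacts [componentSetoid_rel hq, Setoid.symm' _ (componentSetoid_rel hq)]

theorem card_component_le [Finite E] (i : V) :
    Nat.card {j // componentSetoid a b T i j} ≤
      {q ∈ T | componentSetoid a b T i (a q)}.ncard + 1 := by
  let G : SimpleGraph V := .fromRel fun i j => ∃ q ∈ T, a q = i ∧ b q = j
  let C := G.connectedComponentMk i
  have hC (j : V) : j ∈ C.supp ↔ componentSetoid a b T i j := by
    rw [componentSetoid_eq_reachableSetoid]
    exact SimpleGraph.ConnectedComponent.eq.trans ⟨.symm, .symm⟩
  have hedges : Sym2.map Subtype.val '' C.toSimpleGraph.edgeSet ⊆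
      (fun q => s(a q, b q)) '' {q ∈ T | componentSetoid a b T i (a q)} := by
    rintro _ ⟨e, he, rfl⟩
    induction e with | _ x y
    rcases he.2 with ⟨q, hq, hx, hy⟩ | ⟨q, hq, hy, hx⟩
    · exact ⟨q, ⟨hq, hx ▸ (hC x).1 x.2⟩, by simp [hx, hy]⟩
    · exact ⟨q, ⟨hq, hy ▸ (hC y).1 y.2⟩, by simp [hx, hy, Sym2.eq_swap]⟩
  calc Nat.card {j // componentSetoid a b T i j}
      = Nat.card C.supp := Nat.card_congr (Equiv.subtypeEquivRight hC).symm
    _ ≤ C.toSimpleGraph.edgeSet.ncard + 1 :=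
        C.connected_toSimpleGraph.card_vert_le_card_edgeSet_add_one
    _ ≤ {q ∈ T | componentSetoid a b T i (a q)}.ncard + 1 := by
        rw [← Set.ncard_image_of_injective _ (Sym2.map.injective Subtype.val_injective)]
        gcongr
        exact (Set.ncard_le_ncard hedges (Set.toFinite _)).trans
          (Set.ncard_image_le (Set.toFinite _))

theorem subsingleton_component_diff [Finite E]
    (hT : componentSetoid a b Set.univ ≤ componentSetoid a b T) {i : V}
    (hcard : Nat.card {q // componentSetoid a b Set.univ i (a q)} ≤
      Nat.card {j // componentSetoid a b Set.univ i j}) :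
    ({q | componentSetoid a b Set.univ i (a q)} \ T).Subsingleton := by
  have heq : componentSetoid a b Set.univ = componentSetoid a b T :=
    hT.antisymm (componentSetoid_mono (Set.subset_univ _))
  have hspan := card_component_le (a := a) (b := b) (T := T) i
  have hsplit := Set.ncard_inter_add_ncard_sdiff_eq_ncard
    {q | componentSetoid a b Set.univ i (a q)} T (Set.toFinite _)
  rw [← heq, show {q ∈ T | componentSetoid a b Set.univ i (a q)} =
    {q | componentSetoid a b Set.univ i (a q)} ∩ T from Set.inter_comm _ _] at hspan
  change Set.ncard {q | componentSetoid a b Set.univ i (a q)} ≤ _ at hcard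
  rw [← Set.ncard_le_one_iff_subsingleton]
  omega

end Components

section Switching

variable {V E Γ : Type*} [Group Γ] (a b : E → V)

/-- The gain of the edge `q` after switching by `W`, in the gain graph whose edge `q` from `a q` to
`b q` has gain `w q`. -/
def switchedGain (w : E → Γ) (W : V → Γ) (q : E) : Γ :=
  W (b q) * w q * (W (a q))⁻¹

theorem exists_switching_neutral_connected [Finite E] (w : E → Γ) :
    ∃ W : V → Γ, componentSetoid a b Set.univ ≤
      componentSetoid a b {q | switchedGain a b w W q = 1} := by
  classical
  let neutral (W : V → Γ) : Set E := {q | switchedGain a b w W q = 1}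
  obtain ⟨W, -, hW⟩ := exists_maximalFor_of_wellFoundedGT (fun _ => True) neutral ⟨1, trivial⟩
  refine ⟨W, componentSetoid_le_iff.2 fun q _ => ?_⟩
  by_contra hq
  -- Switching the component of `a q` by a constant keeps the neutral edges and makes `q` neutral.
  let W' (i : V) : Γ :=
    if componentSetoid a b (neutral W) (a q) i then W (b q) * w q * (W (a q))⁻¹ * W i else W i
  have hW' : neutral W ⊆ neutral W' := by
    intro p hp
    have hiff : componentSetoid a b (neutral W) (a q) (a p) ↔
        componentSetoid a b (neutral W) (a q) (b p) :=
      ⟨fun h => Setoid.trans' _ h (componentSetoid_rel hp),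
        fun h => Setoid.trans' _ h (Setoid.symm' _ (componentSetoid_rel hp))⟩
    have hp' : W (b p) * w p = W (a p) := mul_inv_eq_one.1 hp
    simp only [neutral, Set.mem_ofPred_eq, switchedGain, W', hiff, mul_inv_eq_one]
    split_ifs <;> simp only [mul_assoc, hp']
  have hqW' : q ∈ neutral W' := by
    simp [neutral, switchedGain, W', hq]
  exact hq (componentSetoid_rel (hW trivial hW' hqW'))

theorem semiconjBy_conj_iff {H : Type*} [Group H] {A B w x y : H} :
    SemiconjBy (B * w * A⁻¹) (A * x * A⁻¹) (B * y * B⁻¹) ↔ SemiconjBy w x y := by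
  simp only [SemiconjBy, mul_assoc, inv_mul_cancel_left, mul_right_inj]
  rw [← mul_assoc, ← mul_assoc, mul_left_inj]

theorem semiconjBy_iff_of_neutral_connected {a b} {H : Type*} [Group H] {y : V → H} {u : E → H}
    {T : Set E} (hu : ∀ q ∈ T, u q = 1)
    (hT : componentSetoid a b Set.univ ≤ componentSetoid a b T) :
    (∀ q, SemiconjBy (u q) (y (a q)) (y (b q))) ↔
      componentSetoid a b Set.univ ≤ Setoid.ker y ∧ ∀ q, Commute (u q) (y (a q)) := by
  have hcomm (hy : componentSetoid a b Set.univ ≤ Setoid.ker y) (q : E) :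
      SemiconjBy (u q) (y (a q)) (y (b q)) ↔ Commute (u q) (y (a q)) := by
    rw [Commute, ← (hy (componentSetoid_rel trivial) : y (a q) = y (b q))]
  refine ⟨fun h => ?_, fun ⟨hy, h⟩ q => (hcomm hy q).2 (h q)⟩
  have hy : componentSetoid a b Set.univ ≤ Setoid.ker y :=
    hT.trans <| componentSetoid_le_iff.2 fun q hq => by
      simpa [hu q hq, SemiconjBy] using h q
  exact ⟨hy, fun q => (hcomm hy q).1 (h q)⟩

end Switching

section Cycles

open Equiv.Perm

variable {V : Type*}

theorem exists_idempotent_ker_eq (S : Setoid V) :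
    ∃ r : V → V, (∀ i, r (r i) = r i) ∧ Setoid.ker r = S := by
  refine ⟨fun i => (Quotient.mk S i).out, fun i => by simp, Setoid.ext fun i j => ?_⟩
  rw [Setoid.ker_def, Quotient.out_inj, Quotient.eq]

theorem componentSetoid_perm_le_sameCycle {τ : Equiv.Perm V} :
    componentSetoid τ id Set.univ ≤ SameCycle.setoid τ :=
  componentSetoid_le_iff.2 fun i _ => (SameCycle.refl τ i).apply_left

variable [Finite V]

theorem exists_perm_sameCycle_setoid_eq_ker {C : Type*} (f : V → C) :
    ∃ τ : Equiv.Perm V, SameCycle.setoid τ = Setoid.ker f := by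
  have hcycle (c : C) : ∃ π : Equiv.Perm {i // f i = c}, π.IsCycleOn Set.univ := by
    have := Fintype.ofFinite {i // f i = c}
    classical
    obtain ⟨π, hπ, -⟩ := Finset.exists_cycleOn (Finset.univ : Finset {i // f i = c})
    exact ⟨π, by simpa using hπ⟩
  choose π hπ using hcycle
  let φ : (∀ c, Equiv.Perm {i // f i = c}) →* Equiv.Perm V :=
    (Equiv.sigmaFiberEquiv f).permCongrHom.toMonoidHom.comp (sigmaCongrRightHom _)
  have hφ (n : ℤ) (i : V) : (φ π ^ n) i = (π (f i) ^ n) ⟨i, rfl⟩ := by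
    rw [← map_zpow]
    rfl
  refine ⟨φ π, Setoid.ext fun i j => ⟨?_, fun hij => ?_⟩⟩
  · rintro ⟨n, rfl⟩
    rw [hφ]
    exact ((π (f i) ^ n) ⟨i, rfl⟩).2.symm
  · obtain ⟨n, hn⟩ := (hπ (f i)).2 (Set.mem_univ ⟨i, rfl⟩) (Set.mem_univ ⟨j, hij.symm⟩)
    exact ⟨n, by rw [hφ, hn]⟩

theorem ker_le_componentSetoid_perm {τ : Equiv.Perm V} {r : V → V} (hr : ∀ i, r (r i) = r i)
    (hτ : SameCycle.setoid τ = Setoid.ker r) :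
    Setoid.ker r ≤ componentSetoid τ id {i | r (τ i) ≠ τ i} := by
  have hτr (i j : V) : SameCycle τ i j ↔ r i = r j := Setoid.ext_iff.1 hτ i j
  -- Without the edge ending at `r i`, the cycle through `r i` is still a path starting at `r i`.
  have hpow (i : V) (n : ℕ) :
      componentSetoid τ id {i | r (τ i) ≠ τ i} (r i) ((τ ^ n) (r i)) := by
    induction n with
    | zero => exact Setoid.refl' _ _
    | succ n ih =>
      have hn : r ((τ ^ (n + 1)) (r i)) = r i := by
        rw [← (hτr (r i) _).1 (sameCycle_pow_right.2 (.refl _ _)), hr]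
      rw [pow_succ', Equiv.Perm.mul_apply] at hn ⊢
      by_cases h : r i = τ ((τ ^ n) (r i))
      · rw [← h]
      · exact Setoid.trans' _ ih <| Setoid.symm' _ <| componentSetoid_rel (hn.trans_ne h)
  have hroot (i : V) : componentSetoid τ id {i | r (τ i) ≠ τ i} (r i) i := by
    obtain ⟨n, -, hn⟩ := ((hτr _ _).2 (hr i)).exists_pow_eq'
    simpa only [hn] using hpow i n
  intro i j hij
  have hij : r i = r j := hij
  exact Setoid.trans' _ (Setoid.symm' _ (hroot i)) (hij ▸ hroot j)

theorem exists_perm_componentSetoid_eq (S : Setoid V) :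
    ∃ (τ : Equiv.Perm V) (r : V → V), (∀ i, r (r i) = r i) ∧ Setoid.ker r = S ∧
      componentSetoid τ id Set.univ = S ∧ S ≤ componentSetoid τ id {i | r (τ i) ≠ τ i} := by
  obtain ⟨r, hr, rfl⟩ := exists_idempotent_ker_eq S
  obtain ⟨τ, hτ⟩ := exists_perm_sameCycle_setoid_eq_ker r
  have hle := ker_le_componentSetoid_perm hr hτ
  refine ⟨τ, r, hr, rfl, le_antisymm ?_ (hle.trans (componentSetoid_mono (Set.subset_univ _))), hle⟩
  rw [← hτ]
  exact componentSetoid_perm_le_sameCycle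

end Cycles

section Presentations

universe u

variable {V : Type u} {E : Type*}

/-- The relators `x_{a q}⁻¹ w_q⁻¹ x_{b q} w_q` on arbitrary types of generators and relators: both
Wirtinger presentations and Gauss diagrams are of this form. -/
def conjRels (a b : E → V) (w : E → FreeGroup V) : Set (FreeGroup V) :=
  Set.range fun q => (FreeGroup.of (a q))⁻¹ * (w q)⁻¹ * FreeGroup.of (b q) * w q

/-- The assignments of group elements to generators that satisfy the relators `conjRels a b w`. -/
def IsColoring {H : Type*} [Group H] (a b : E → V) (w : E → FreeGroup V) (x : V → H) : Prop :=
  ∀ q, SemiconjBy (FreeGroup.lift x (w q)) (x (a q)) (x (b q))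

theorem isColoring_iff_lift_conjRels {H : Type*} [Group H] {a b : E → V} {w : E → FreeGroup V}
    {x : V → H} : IsColoring a b w x ↔ ∀ r ∈ conjRels a b w, FreeGroup.lift x r = 1 := by
  simp only [IsColoring, conjRels, Set.forall_mem_range, map_mul, map_inv, FreeGroup.lift_apply_of]
  refine forall_congr' fun q => ?_
  rw [SemiconjBy, mul_assoc, ← mul_inv_rev, inv_mul_eq_one]

theorem presentedGroup_lift_of_eq_mk (R : Set (FreeGroup V)) :
    FreeGroup.lift (PresentedGroup.of (rels := R)) = PresentedGroup.mk R := by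
  ext
  simp [PresentedGroup.of]

/-- Tietze elimination of the generators outside the range of `s`. -/
theorem nonempty_mulEquiv_of_eliminated_generators {K : Type u} {R : Set (FreeGroup V)}
    {S : Set (FreeGroup K)} {s : V → K} {p : K → FreeGroup V}
    (hp : ∀ i, p (s i) = FreeGroup.of i)
    (h : ∀ (H : Type u) [Group H] (z : K → H), (∀ r ∈ S, FreeGroup.lift z r = 1) ↔
      (∀ r ∈ R, FreeGroup.lift (z ∘ s) r = 1) ∧ ∀ k, z k = FreeGroup.lift (z ∘ s) (p k)) :
    Nonempty (PresentedGroup R ≃* PresentedGroup S) := by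
  have hS := (h (PresentedGroup S) PresentedGroup.of).1 fun r hr => by
    rw [presentedGroup_lift_of_eq_mk]
    exact PresentedGroup.one_of_mem hr
  let z (k : K) : PresentedGroup R := PresentedGroup.mk R (p k)
  have hzs : z ∘ s = PresentedGroup.of := by
    ext i
    simp only [z, Function.comp_apply, hp, PresentedGroup.of]
  have hz : ∀ r ∈ S, FreeGroup.lift z r = 1 := by
    refine (h _ z).2 ⟨fun r hr => ?_, fun k => ?_⟩
    all_goals rw [hzs, presentedGroup_lift_of_eq_mk]
    exact PresentedGroup.one_of_mem hr
  refine ⟨MonoidHom.toMulEquiv (PresentedGroup.toGroup hS.1) (PresentedGroup.toGroup hz) ?_ ?_⟩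
  · ext i
    simpa [PresentedGroup.toGroup.of] using congrFun hzs i
  · ext k
    simp only [MonoidHom.comp_apply, PresentedGroup.toGroup.of, MonoidHom.id_apply, z]
    exact (hS.2 k).symm

theorem nonempty_mulEquiv_of_isColoring_iff {E' : Type*} {a b : E → V} {a' b' : E' → V}
    {w : E → FreeGroup V} {w' : E' → FreeGroup V}
    (h : ∀ {H : Type u} [Group H] (x : V → H), IsColoring a b w x ↔ IsColoring a' b' w' x) :
    Nonempty (PresentedGroup (conjRels a b w) ≃* PresentedGroup (conjRels a' b' w')) :=
  nonempty_mulEquiv_of_eliminated_generators (s := id) (p := FreeGroup.of) (fun _ => rfl)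
    fun H _ z => by
      simp [← isColoring_iff_lift_conjRels, h]

end Presentations

section CyclicForm

universe u v

theorem exists_commute_iff_of_subsingleton {E Γ : Type*} [Group Γ] {u : E → Γ} {s : Set E}
    (hs : {q ∈ s | u q ≠ 1}.Subsingleton) :
    ∃ v : Γ, ∀ {H : Type u} [Group H] (X : Γ →* H) (y : H),
      (∀ q ∈ s, Commute (X (u q)) y) ↔ Commute (X v) y := by
  obtain h | ⟨q, h⟩ := hs.eq_empty_or_singleton
  · have h1 : ∀ q ∈ s, u q = 1 := by
      simpa [Set.eq_empty_iff_forall_notMem] using h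
    exact ⟨1, fun X y => by simp +contextual [h1]⟩
  · refine ⟨u q, fun X y => ⟨fun hy => hy q (h.superset rfl).1, fun hy p hp => ?_⟩⟩
    obtain h1 | h1 := eq_or_ne (u p) 1
    · simp [h1]
    · obtain rfl : p = q := h.subset ⟨hp, h1⟩
      exact hy

variable {V : Type u} {E : Type v} {a b : E → V} {w : E → FreeGroup V}

theorem isColoring_iff_of_neutral_connected {W : V → FreeGroup V}
    (hW : componentSetoid a b Set.univ ≤ componentSetoid a b {q | switchedGain a b w W q = 1})
    {H : Type*} [Group H] {x : V → H} :
    IsColoring a b w x ↔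
      componentSetoid a b Set.univ ≤
        Setoid.ker (fun i => FreeGroup.lift x (W i * FreeGroup.of i * (W i)⁻¹)) ∧
      ∀ q, Commute (FreeGroup.lift x (switchedGain a b w W q))
        (FreeGroup.lift x (W (a q) * FreeGroup.of (a q) * (W (a q))⁻¹)) := by
  rw [← semiconjBy_iff_of_neutral_connected (T := {q | switchedGain a b w W q = 1}) _ hW]
  · simp only [switchedGain, map_mul, map_inv, FreeGroup.lift_apply_of, semiconjBy_conj_iff,
      IsColoring]
  · exact fun q hq => by rw [show _ = _ from hq, map_one]

theorem exists_perm_isColoring_iff [Finite V] [Finite E]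
    (hcard : ∀ i, Nat.card {q // componentSetoid a b Set.univ i (a q)} ≤
      Nat.card {j // componentSetoid a b Set.univ i j}) :
    ∃ (τ : Equiv.Perm V) (g : V → FreeGroup V), ∀ {H : Type u} [Group H] (x : V → H),
      IsColoring a b w x ↔ IsColoring τ id g x := by
  classical
  obtain ⟨W, hW⟩ := exists_switching_neutral_connected a b w
  let S := componentSetoid a b Set.univ
  let u := switchedGain a b w W
  have hu (i : V) : {q ∈ {q | S i (a q)} | u q ≠ 1}.Subsingleton :=
    subsingleton_component_diff hW (hcard i)
  choose v hv using fun i => exists_commute_iff_of_subsingleton.{u, v, u} (hu i)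
  obtain ⟨τ, r, hr, hS, hτS, hconn⟩ := exists_perm_componentSetoid_eq S
  let κ (j : V) : FreeGroup V := if r j = j then v j else 1
  let g (i : V) : FreeGroup V := (W i)⁻¹ * κ (τ i) * W (τ i)
  have hκ (i : V) : switchedGain τ id g W i = κ (τ i) := by
    simp [switchedGain, g, mul_assoc]
  have hneutral : S ≤ componentSetoid τ id {i | switchedGain τ id g W i = 1} :=
    hconn.trans (componentSetoid_mono fun i hi => (hκ i).trans (if_neg hi))
  refine ⟨τ, g, fun {H} _ x => ?_⟩
  rw [isColoring_iff_of_neutral_connected hW,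
    isColoring_iff_of_neutral_connected (hτS.trans_le hneutral), hτS]
  refine and_congr_right fun hy => ?_
  set y : V → H := fun i => FreeGroup.lift x (W i * FreeGroup.of i * (W i)⁻¹)
  have hy {i j : V} (hij : S i j) : y i = y j := hy hij
  have hroot {j : V} (hj : r j = j) : Commute (FreeGroup.lift x (κ j)) (y j) ↔
      ∀ q, S j (a q) → Commute (FreeGroup.lift x (u q)) (y j) := by
    rw [show κ j = v j from if_pos hj, ← hv]
    rfl
  simp only [hκ]
  constructor
  · intro h i
    by_cases hi : r (τ i) = τ i
    · exact (hroot hi).2 fun q hq => hy hq ▸ h q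
    · simp [κ, hi]
  · intro h q
    have hq : S (r (a q)) (a q) := hS ▸ hr (a q)
    obtain ⟨i, hi⟩ := τ.surjective (r (a q))
    have hcomm := (hroot (hr _)).1 (hi ▸ h i) q hq
    rwa [hy hq] at hcomm

end CyclicForm

section Expansion

theorem semiconjBy_getElem_iff_take {α H : Type*} [Group H] (f : α → H) (l : List α) (c : ℕ → H) :
    (∀ j, ∀ hj : j < l.length, SemiconjBy (f l[j]) (c (j + 1)) (c j)) ↔
      ∀ j ≤ l.length, SemiconjBy ((l.take j).map f).prod (c j) (c 0) := by
  have hsucc {j : ℕ} (hj : j < l.length) :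
      ((l.take (j + 1)).map f).prod = ((l.take j).map f).prod * f l[j] := by
    rw [List.take_succ_eq_append_getElem hj, List.map_append, List.prod_append]
    simp
  refine ⟨fun h j => ?_, fun h j hj => ?_⟩
  · induction j with
    | zero => simp
    | succ j ih =>
      intro hj
      rw [hsucc hj]
      exact (ih (Nat.le_of_succ_le hj)).mul_left (h j hj)
  · rw [← inv_mul_eq_of_eq_mul (hsucc hj)]
    exact (h j hj.le).inv_symm_left.mul_left (h (j + 1) hj)

theorem semiconjBy_getElem_iff_prod {α H : Type*} [Group H] (f : α → H) (l : List α) (c : ℕ → H) :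
    (∀ j, ∀ hj : j < l.length, SemiconjBy (f l[j]) (c (j + 1)) (c j)) ↔
      SemiconjBy (l.map f).prod (c l.length) (c 0) ∧ ∀ j < l.length,
        c j = ((l.take j).map f).prod⁻¹ * c 0 * ((l.take j).map f).prod := by
  have hconj (p x y : H) : x = p⁻¹ * y * p ↔ SemiconjBy p x y := by
    rw [SemiconjBy, mul_assoc, eq_inv_mul_iff_mul_eq]
  simp only [semiconjBy_getElem_iff_take, hconj, le_iff_lt_or_eq, or_imp, forall_and, forall_eq,
    List.take_length, and_comm]

universe u

variable {V : Type u} (τ : Equiv.Perm V) (L : V → List (V × Bool)) (hL : ∀ i, L i ≠ [])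

/-- The arcs obtained by cutting each generator `i` into one arc per letter of the word `L i`. -/
abbrev Arc := Σ i, Fin (L i).length

variable {L}

namespace Arc

/-- The arc that carries the generator `i` itself. -/
def start (i : V) : Arc L := ⟨i, 0, List.length_pos_of_ne_nil (hL i)⟩

/-- The `j`-th arc of the generator `i`, where the arc after the last one is the first arc
of `τ i`. -/
def nth (i : V) (j : ℕ) : Arc L :=
  if h : j < (L i).length then ⟨i, j, h⟩ else start hL (τ i)

theorem nth_zero (i : V) : nth τ hL i 0 = start hL i :=
  dif_pos _

theorem nth_length (i : V) : nth τ hL i (L i).length = start hL (τ i) :=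
  dif_neg (lt_irrefl _)

theorem nth_val (k : Arc L) : nth τ hL k.1 k.2 = k :=
  dif_pos k.2.2

theorem surjective_nth_succ :
    Function.Surjective fun k : Arc L => nth τ hL k.1 (k.2 + 1) := by
  rintro ⟨i, _ | j, hj⟩
  · have hpos := List.length_pos_of_ne_nil (hL (τ.symm i))
    refine ⟨⟨τ.symm i, (L (τ.symm i)).length - 1, Nat.sub_one_lt_of_lt hpos⟩, ?_⟩
    simp only [Nat.sub_one_add_one hpos.ne', nth_length, Equiv.apply_symm_apply]
    rfl
  · exact ⟨⟨i, j, Nat.lt_of_succ_lt hj⟩, nth_val τ hL ⟨i, j + 1, hj⟩⟩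

/-- The permutation sending each arc to the next one along the cycle of `τ`. -/
noncomputable def next [Finite V] : Equiv.Perm (Arc L) :=
  .ofBijective _ (Finite.surjective_iff_bijective.1 (surjective_nth_succ τ hL))

theorem next_apply [Finite V] (k : Arc L) : next τ hL k = nth τ hL k.1 (k.2 + 1) := rfl

/-- The letter of the words `L` at which an arc ends. -/
def letter (k : Arc L) : V × Bool := (L k.1)[k.2]

/-- The arc carrying the tail of the arrow whose head ends the arc `k`. -/
def tail (k : Arc L) : Arc L := start hL (letter k).1

/-- The sign of the arrow whose head ends the arc `k`. -/
def sign (k : Arc L) : ℤ := if (letter k).2 then 1 else -1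

/-- The generator of the arc `k` in terms of the generators of the first arcs. -/
def word (k : Arc L) : FreeGroup V :=
  (FreeGroup.mk ((L k.1).take k.2))⁻¹ * FreeGroup.of k.1 * FreeGroup.mk ((L k.1).take k.2)

theorem word_start (i : V) : word (start hL i) = FreeGroup.of i := by
  simp [word, start, ← FreeGroup.one_eq_mk]

theorem isColoring_next_iff [Finite V] {H : Type*} [Group H] (z : Arc L → H) :
    IsColoring (next τ hL) id (fun k => FreeGroup.of (tail hL k) ^ sign k) z ↔
      IsColoring τ id (fun i => FreeGroup.mk (L i)) (z ∘ start hL) ∧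
        ∀ k, z k = FreeGroup.lift (z ∘ start hL) (word k) := by
  let f (p : V × Bool) : H := cond p.2 (z (start hL p.1)) (z (start hL p.1))⁻¹
  have hword (l : List (V × Bool)) : FreeGroup.lift (z ∘ start hL) (FreeGroup.mk l) =
      (l.map f).prod := FreeGroup.lift_mk
  have hletter (k : Arc L) : FreeGroup.lift z (FreeGroup.of (tail hL k) ^ sign k) =
      f (letter k) := by
    rw [map_zpow, FreeGroup.lift_apply_of, sign, tail]
    cases h : (letter k).2 <;> simp [f, h]
  have hchain (i : V) := semiconjBy_getElem_iff_prod f (L i) fun j => z (nth τ hL i j)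
  have hval {i : V} {j : ℕ} (hj : j < (L i).length) : nth τ hL i j = ⟨i, j, hj⟩ :=
    nth_val τ hL ⟨i, j, hj⟩
  calc IsColoring (next τ hL) id (fun k => FreeGroup.of (tail hL k) ^ sign k) z
      ↔ ∀ i j, ∀ hj : j < (L i).length,
          SemiconjBy (f (L i)[j]) (z (nth τ hL i (j + 1))) (z (nth τ hL i j)) := by
        simp only [IsColoring, hletter, next_apply, Sigma.forall, Fin.forall_iff]
        refine forall₃_congr fun i j hj => ?_
        rw [hval hj]
        rfl
    _ ↔ _ := by
        simp only [hchain, forall_and, nth_length, nth_zero, IsColoring, hword, Sigma.forall,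
          Fin.forall_iff, word, map_mul, map_inv, FreeGroup.lift_apply_of]
        refine and_congr_right fun _ => forall₃_congr fun i j hj => ?_
        rw [hval hj]
        rfl

end Arc

theorem exists_gaussForm_mulEquiv [Finite V] (τ : Equiv.Perm V) (g : V → FreeGroup V) :
    ∃ (K : Type u) (_ : Finite K) (σ : Equiv.Perm K) (t : K → K) (ε : K → ℤ),
      (∀ k, ε k = 1 ∨ ε k = -1) ∧ Nonempty (PresentedGroup (conjRels τ id g) ≃*
        PresentedGroup (conjRels σ id fun k => FreeGroup.of (t k) ^ ε k)) := by
  classical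
  -- The extra letter `i` commutes with the generator `i` and makes the word non-empty.
  let L (i : V) : List (V × Bool) := (i, true) :: (g i).toWord
  have hL (i : V) : L i ≠ [] := List.cons_ne_nil _ _
  have hmk (i : V) : FreeGroup.mk (L i) = FreeGroup.of i * g i := by
    conv_rhs => rw [← FreeGroup.mk_toWord (x := g i)]
    rfl
  have hcol {H : Type u} [Group H] (x : V → H) :
      IsColoring τ id g x ↔ IsColoring τ id (fun i => FreeGroup.mk (L i)) x := by
    simp only [IsColoring, hmk, map_mul, FreeGroup.lift_apply_of, SemiconjBy, mul_assoc, id,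
      mul_right_inj]
  obtain ⟨e⟩ := nonempty_mulEquiv_of_isColoring_iff hcol
  obtain ⟨e'⟩ := nonempty_mulEquiv_of_eliminated_generators (Arc.word_start hL)
    fun H _ z => by simpa only [isColoring_iff_lift_conjRels] using Arc.isColoring_next_iff τ hL z
  exact ⟨Arc L, inferInstance, Arc.next τ hL, Arc.tail hL, Arc.sign,
    fun k => ite_eq_or_eq _ _ _, ⟨e.trans e'⟩⟩

end Expansion

theorem wirtingerRels_eq_conjRels (n s : ℕ) (a b : Fin s → Fin n) (w : Fin s → FreeGroup (Fin n)) :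
    wirtingerRels n s a b w = conjRels a b w := by
  ext
  simp [wirtingerRels, conjRels, eq_comm]

theorem gaussRels_eq_conjRels (m : ℕ) (σ : Equiv.Perm (Fin m)) (t : Fin m → Fin m)
    (ε : Fin m → ℤ) :
    gaussRels m σ t ε = conjRels σ id fun q => FreeGroup.of (t q) ^ ε q := by
  ext
  simp [gaussRels, conjRels, eq_comm]

theorem componentSetoid_univ_iff {n s : ℕ} {a b : Fin s → Fin n} {i j : Fin n} :
    componentSetoid a b Set.univ i j ↔ Relation.EqvGen (wirtingerEdge n s a b) i j := by
  change Relation.EqvGen _ i j ↔ _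
  simp only [Set.mem_univ, true_and]
  rfl

theorem exists_gaussRels_mulEquiv {K : Type*} [Finite K] (σ : Equiv.Perm K) (t : K → K)
    (ε : K → ℤ) (hε : ∀ k, ε k = 1 ∨ ε k = -1) :
    ∃ (m : ℕ) (σ' : Equiv.Perm (Fin m)) (t' : Fin m → Fin m) (ε' : Fin m → ℤ),
      (∀ q, ε' q = 1 ∨ ε' q = -1) ∧
      Nonempty (PresentedGroup (conjRels σ id fun k => FreeGroup.of (t k) ^ ε k) ≃*
        PresentedGroup (gaussRels m σ' t' ε')) := by
  obtain ⟨m, ⟨e⟩⟩ := Finite.exists_equiv_fin K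
  refine ⟨m, e.permCongr σ, e ∘ t ∘ e.symm, ε ∘ e.symm, fun q => hε _, ?_⟩
  have hrels : FreeGroup.freeGroupCongr e ''
      conjRels σ id (fun k => FreeGroup.of (t k) ^ ε k) =
        gaussRels m (e.permCongr σ) (e ∘ t ∘ e.symm) (ε ∘ e.symm) := by
    rw [gaussRels_eq_conjRels, conjRels, conjRels, ← Set.range_comp, ← e.surjective.range_comp]
    congr 1
    ext q
    simp
  exact ⟨hrels ▸ PresentedGroup.equivPresentedGroup _ e⟩

theorem gauss_diagram_group_iff_wirtinger
    (G : Type*) [Group G] :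
    (∃ (m : ℕ) (σ : Equiv.Perm (Fin m)) (t : Fin m → Fin m) (ε : Fin m → ℤ),
      (∀ q : Fin m, ε q = 1 ∨ ε q = -1) ∧
      Nonempty (G ≃* PresentedGroup (gaussRels m σ t ε))) ↔
    (∃ (n s : ℕ) (a b : Fin s → Fin n) (w : Fin s → FreeGroup (Fin n)),
      (∀ i : Fin n,
        Nat.card { q : Fin s // Relation.EqvGen (wirtingerEdge n s a b) i (a q) } ≤
          Nat.card { j : Fin n // Relation.EqvGen (wirtingerEdge n s a b) i j }) ∧
      Nonempty (G ≃* PresentedGroup (wirtingerRels n s a b w))) := by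
  constructor
  · rintro ⟨m, σ, t, ε, -, ⟨e⟩⟩
    refine ⟨m, m, σ, id, fun q => FreeGroup.of (t q) ^ ε q, fun i => ?_, ⟨?_⟩⟩
    · exact Nat.card_le_card_of_injective (Subtype.map σ fun _ => id)
        (Subtype.map_injective _ σ.injective)
    · rwa [wirtingerRels_eq_conjRels, ← gaussRels_eq_conjRels]
  · rintro ⟨n, s, a, b, w, hcard, ⟨e⟩⟩
    have hcard' (i : Fin n) : Nat.card {q // componentSetoid a b Set.univ i (a q)} ≤
        Nat.card {j // componentSetoid a b Set.univ i j} := by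
      simpa only [componentSetoid_univ_iff] using hcard i
    obtain ⟨τ, g, hτ⟩ := exists_perm_isColoring_iff (w := w) hcard'
    obtain ⟨e₁⟩ := nonempty_mulEquiv_of_isColoring_iff hτ
    obtain ⟨K, _, σ, t, ε, hε, ⟨e₂⟩⟩ := exists_gaussForm_mulEquiv τ g
    obtain ⟨m, σ', t', ε', hε', ⟨e₃⟩⟩ := exists_gaussRels_mulEquiv σ t ε hε
    rw [wirtingerRels_eq_conjRels] at e
    exact ⟨m, σ', t', ε', hε', ⟨e.trans (e₁.trans (e₂.trans e₃))⟩⟩
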